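/- Let f : (0,∞) → (0,∞) be operator monotone, symmetric (f(x) = x·f(1/x) for all x > 0), normalized (f(1) = 1), and regular, i.e. f(0) := lim_{x→0+} f(x) exists and f(0) ≠ 0. Define f̃(x) := ½[ (x+1) − (x−1)²·f(0)/f(x) ] for x > 0. Then f̃ is operator monotone on (0,∞), symmetric (f̃(x) = x·f̃(1/x)), normalized (f̃(1) = 1), and non-regular: lim_{x→0+} f̃(x) = 0. -/

import Mathlib

open Matrix
open scoped ComplexOrder

/-- A function `f : ℝ → ℝ` is operator monotone on `(0,∞)` if for every `n` and all
positive-definite (Hermitian) complex `n×n` matrices `A, B` with `B − A` positive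
semidefinite, the matrix `f(B) − f(A)` is positive semidefinite, where `f` is applied
through the functional calculus for Hermitian matrices (on the eigenvalues). -/
def OperatorMonotoneOn (f : ℝ → ℝ) : Prop :=
  ∀ (n : ℕ) (A B : Matrix (Fin n) (Fin n) ℂ) (hA : A.PosDef) (hB : B.PosDef),
    (B - A).PosSemidef → ((hB.1.cfc f) - (hA.1.cfc f)).PosSemidef

/-! For operator monotone `f > 0`, both `-1 / f` and `x / f x` are operator monotone, hence so is
`g x = 1 + f(0) * (x - 1) / f x`; it is nonnegative because `f(0) ≤ f x`. The transpose
`x * g (1 / x)` of a nonnegative operator monotone function is again operator monotone, by Hansen's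
transformer inequality `Tᴴ * g(B) * T ≤ g(A)` for contractions `T` with `Tᴴ * B * T ≤ A`. Since `f`
equals its own transpose, `f̃` is the arithmetic mean of `g` and the transpose of `g`. -/

section CStarAlgebra

variable {A : Type*} [CStarAlgebra A] [PartialOrder A] [StarOrderedRing A]

lemma exists_pos_smul_one_le {a : A} (ha : IsStrictlyPositive a) :
    ∃ r : ℝ, 0 < r ∧ r • 1 ≤ a := by
  cases subsingleton_or_nontrivial A
  · exact ⟨1, one_pos, (Subsingleton.elim _ _).le⟩
  simp only [← Algebra.algebraMap_eq_smul_one]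
  exact (CFC.exists_pos_algebraMap_le_iff ha.isSelfAdjoint).2 fun x hx => ha.spectrum_pos hx

/- With `s = ε p - (1 - p) a p`, the square `ε⁻¹ s s⋆ ≥ 0` absorbs the off-diagonal part
`p a (1 - p) + (1 - p) a p` of `a`, at the cost of a term supported on `1 - p`. -/
lemma exists_le_compression_add {p a : A} (hp : IsStarProjection p)
    (ha : IsSelfAdjoint a) {ε : ℝ} (hε : 0 < ε) :
    ∃ l : ℝ, a ≤ p * a * p + ε • p + l • (1 - p) := by
  set b := ε⁻¹ • (a * p * a) + a
  have hb : IsSelfAdjoint b := .add (.smul (.all _) (hp.isSelfAdjoint.conjugate_self ha)) ha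
  have hpp (x : A) : p * (p * x) = p * x := by
    rw [← mul_assoc, hp.isIdempotentElem.eq]
  have hcorner : 0 ≤ (1 - p) * (‖b‖ • 1 - b) * (1 - p) :=
    hp.one_sub.isSelfAdjoint.conjugate_nonneg (sub_nonneg.2 <| by
      simpa only [Algebra.algebraMap_eq_smul_one] using hb.le_algebraMap_norm_self)
  have hsquare : 0 ≤ ε⁻¹ • ((ε • p - (1 - p) * a * p) * star (ε • p - (1 - p) * a * p)) :=
    smul_nonneg (inv_nonneg.2 hε.le) (mul_star_self_nonneg _)
  refine ⟨‖b‖, sub_nonneg.1 ?_⟩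
  convert add_nonneg hsquare hcorner using 1
  simp only [b, star_sub, star_smul, star_mul, star_trivial, hp.isSelfAdjoint.star_eq,
    ha.star_eq, mul_sub, sub_mul, mul_add, add_mul, smul_sub, smul_mul_assoc, mul_smul_comm,
    mul_assoc, mul_one, one_mul, hp.isIdempotentElem.eq, hpp, smul_smul, inv_mul_cancel₀ hε.ne',
    inv_mul_cancel_left₀ hε.ne', one_smul]
  module

end CStarAlgebra

section FunctionalCalculus

variable {𝕜 m n : Type*} [RCLike 𝕜] [Fintype m] [Fintype n] [DecidableEq m] [DecidableEq n]

lemma continuousOn_spectrum (A : Matrix n n 𝕜) (f : ℝ → ℝ) : ContinuousOn f (spectrum ℝ A) :=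
  A.finite_real_spectrum.continuousOn f

/- On the finite set `spectrum ℝ A ∪ spectrum ℝ B` the function `f` agrees with a polynomial. -/
lemma mul_cfc_eq_cfc_mul_of_intertwine {A : Matrix n n 𝕜} {B : Matrix m m 𝕜}
    (hA : A.IsHermitian) (hB : B.IsHermitian) {X : Matrix m n 𝕜} (hX : X * A = B * X)
    (f : ℝ → ℝ) : X * cfc f A = cfc f B * X := by
  classical
  set s := (A.finite_real_spectrum.union B.finite_real_spectrum).toFinset
  set p := Lagrange.interpolate s id f
  have hp {x : ℝ} (hx : x ∈ s) : f x = p.eval x :=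
    (Lagrange.eval_interpolate_at_node f (Set.injOn_id _) hx).symm
  have hfA : cfc f A = Polynomial.aeval A p := by
    rw [← cfc_polynomial p A hA.isSelfAdjoint]
    exact cfc_congr fun x hx => hp (by simp [s, hx])
  have hfB : cfc f B = Polynomial.aeval B p := by
    rw [← cfc_polynomial p B hB.isSelfAdjoint]
    exact cfc_congr fun x hx => hp (by simp [s, hx])
  have hpow (k : ℕ) : X * A ^ k = B ^ k * X := by
    induction k with
    | zero => simp
    | succ k ih => rw [pow_succ, ← Matrix.mul_assoc, ih, Matrix.mul_assoc, hX, pow_succ,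
        Matrix.mul_assoc]
  simp only [hfA, hfB, Polynomial.aeval_eq_sum_range, Matrix.mul_sum, Matrix.sum_mul,
    Matrix.mul_smul, Matrix.smul_mul, hpow]

lemma cfc_submatrix_equiv {A : Matrix n n 𝕜} (hA : A.IsHermitian) (e : m ≃ n) (f : ℝ → ℝ) :
    cfc f (A.submatrix e e) = (cfc f A).submatrix e e := by
  have hX : (1 : Matrix n n 𝕜).submatrix e id * A
      = A.submatrix e e * (1 : Matrix n n 𝕜).submatrix e id := by
    rw [mul_submatrix_one, ← Equiv.coe_refl, one_submatrix_mul]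
    simp
  have h := mul_cfc_eq_cfc_mul_of_intertwine hA (hA.submatrix e) hX f
  rw [mul_submatrix_one, ← Equiv.coe_refl, one_submatrix_mul] at h
  simpa [Function.id_comp, Function.comp_id] using
    congrArg (fun X : Matrix m n 𝕜 => X.submatrix id e) h.symm

lemma cfc_fromBlocks_zero {A : Matrix m m 𝕜} {B : Matrix n n 𝕜} (hA : A.IsHermitian)
    (hB : B.IsHermitian) (f : ℝ → ℝ) :
    cfc f (fromBlocks A 0 0 B) = fromBlocks (cfc f A) 0 0 (cfc f B) := by
  have hM : (fromBlocks A 0 0 B).IsHermitian := hA.fromBlocks (by simp) hB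
  have hl := mul_cfc_eq_cfc_mul_of_intertwine hA hM (X := fromRows 1 0)
    (by simp [fromBlocks_mul_fromRows, fromRows_mul]) f
  have hr := mul_cfc_eq_cfc_mul_of_intertwine hB hM (X := fromRows 0 1)
    (by simp [fromBlocks_mul_fromRows, fromRows_mul]) f
  calc cfc f (fromBlocks A 0 0 B)
      = cfc f (fromBlocks A 0 0 B) * fromCols (fromRows 1 0) (fromRows 0 1) := by
        rw [fromCols_fromRows_eq_fromBlocks, fromBlocks_one, Matrix.mul_one]
    _ = fromBlocks (cfc f A) 0 0 (cfc f B) := by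
        rw [mul_fromCols, ← hl, ← hr]
        simp only [fromRows_mul, Matrix.one_mul, Matrix.zero_mul, fromCols_fromRows_eq_fromBlocks]

lemma cfc_smul_one (f : ℝ → ℝ) (r : ℝ) : cfc f (r • (1 : Matrix n n 𝕜)) = f r • 1 := by
  simpa only [Algebra.algebraMap_eq_smul_one] using cfc_algebraMap (A := Matrix n n 𝕜) r f

end FunctionalCalculus

section PosDef

open scoped MatrixOrder

variable {𝕜 m n : Type*} [RCLike 𝕜] {A B : Matrix n n 𝕜}

lemma posDef_of_le (hA : A.PosDef) (hAB : A ≤ B) : B.PosDef := by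
  simpa using hA.add_posSemidef (Matrix.le_iff.1 hAB)

lemma conjTranspose_mul_mul_le [Finite m] [Fintype n] (hAB : A ≤ B) (X : Matrix n m 𝕜) :
    Xᴴ * A * X ≤ Xᴴ * B * X := by
  simpa only [Matrix.le_iff, Matrix.mul_sub, Matrix.sub_mul] using
    (Matrix.le_iff.1 hAB).conjTranspose_mul_mul_same X

lemma posDef_fromBlocks_zero [Finite m] [Finite n] {M : Matrix m m 𝕜} (hM : M.PosDef)
    (hA : A.PosDef) : (fromBlocks M 0 0 A).PosDef := by
  classical
  have := Fintype.ofFinite m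
  have := Fintype.ofFinite n
  have := hM.isUnit.invertible
  have hsemi : (fromBlocks M 0 0 A).PosSemidef := by
    simpa using (PosDef.fromBlocks₁₁ 0 A hM).2 (by simpa using hA.posSemidef)
  rw [hsemi.posDef_iff_det_ne_zero, det_fromBlocks_zero₂₁]
  exact mul_ne_zero hM.det_pos.ne' hA.det_pos.ne'

variable [Fintype n] [DecidableEq n]

/- Both inequalities are Schur complements of the block matrix with rows `(B, 1)`, `(1, A⁻¹)`. -/
lemma inv_le_inv_of_posDef (hA : A.PosDef) (hAB : A ≤ B) : B⁻¹ ≤ A⁻¹ := by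
  have hB := posDef_of_le hA hAB
  have := hB.isUnit.invertible
  have := hA.inv.isUnit.invertible
  have hschur : (A⁻¹ - (1 : Matrix n n 𝕜)ᴴ * B⁻¹ * 1).PosSemidef :=
    (PosDef.fromBlocks₁₁ 1 A⁻¹ hB).1 ((PosDef.fromBlocks₂₂ B 1 hA.inv).2 (by
      simpa [nonsing_inv_nonsing_inv A ((isUnit_iff_isUnit_det A).1 hA.isUnit)] using
        Matrix.le_iff.1 hAB))
  simpa [Matrix.le_iff] using hschur

lemma spectrum_pos_of_posDef (hA : A.PosDef) {x : ℝ} (hx : x ∈ spectrum ℝ A) : 0 < x :=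
  hA.isStrictlyPositive.spectrum_pos hx

lemma cfc_congr_of_posDef {f g : ℝ → ℝ} (hA : A.PosDef) (hfg : Set.EqOn f g (Set.Ioi 0)) :
    cfc f A = cfc g A :=
  cfc_congr fun _ hx => hfg (spectrum_pos_of_posDef hA hx)

lemma posDef_cfc {f : ℝ → ℝ} (hA : A.PosDef) (hf : ∀ x, 0 < x → 0 < f x) : (cfc f A).PosDef :=
  isStrictlyPositive_iff_posDef.1 <|
    (cfc_isStrictlyPositive_iff f A (continuousOn_spectrum A f) hA.1.isSelfAdjoint).2
      fun x hx => hf x (spectrum_pos_of_posDef hA hx)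

lemma cfc_inv_of_posDef {f : ℝ → ℝ} (hA : A.PosDef) (hf : ∀ x, 0 < x → f x ≠ 0) :
    cfc (fun x => (f x)⁻¹) A = (cfc f A)⁻¹ := by
  rw [cfc_inv f A (fun x hx => hf x (spectrum_pos_of_posDef hA hx)) (continuousOn_spectrum A f)
    hA.1.isSelfAdjoint, nonsing_inv_eq_ringInverse]

lemma cfc_comp_inv_of_posDef (hA : A.PosDef) (f : ℝ → ℝ) : cfc (fun x => f x⁻¹) A = cfc f A⁻¹ := by
  have hsa := hA.1.isSelfAdjoint
  lift A to (Matrix n n 𝕜)ˣ using hA.isUnit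
  rw [cfc_comp_inv f A ((finite_real_spectrum.image _).continuousOn f) hsa, coe_units_inv]

lemma cfc_sqrt_mul_cfc_sqrt (hA : A.PosSemidef) : cfc Real.sqrt A * cfc Real.sqrt A = A := by
  have hc := continuousOn_spectrum A Real.sqrt
  rw [← cfc_mul _ _ A hc hc]
  exact (cfc_congr fun x hx => Real.mul_self_sqrt (spectrum_nonneg_of_nonneg hA.nonneg hx)).trans
    (cfc_id' ℝ A hA.1.isSelfAdjoint)

lemma cfc_mul_comp_inv (hA : A.PosDef) (f : ℝ → ℝ) :
    cfc (fun x => x * f x⁻¹) A = cfc Real.sqrt A * cfc f A⁻¹ * cfc Real.sqrt A := by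
  have hc := continuousOn_spectrum A
  rw [← cfc_comp_inv_of_posDef hA, ← cfc_mul _ _ A (hc _) (hc _), ← cfc_mul _ _ A (hc _) (hc _)]
  refine cfc_congr_of_posDef hA fun x hx => ?_
  linear_combination -f x⁻¹ * Real.mul_self_sqrt (le_of_lt hx)

end PosDef

section OperatorMonotone

open scoped MatrixOrder Matrix.Norms.L2Operator

variable {m n : Type*} [Fintype m] [Fintype n] [DecidableEq m] [DecidableEq n]
  {f g : ℝ → ℝ}

lemma operatorMonotoneOn_iff_cfc_le_cfc :
    OperatorMonotoneOn f ↔ ∀ (k : ℕ) (A B : Matrix (Fin k) (Fin k) ℂ),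
      A.PosDef → A ≤ B → cfc f A ≤ cfc f B := by
  refine ⟨fun h k A B hA hAB => ?_, fun h k A B hA hB hAB => ?_⟩
  · have hB := posDef_of_le hA hAB
    rw [hA.1.cfc_eq, hB.1.cfc_eq]
    exact h k A B hA hB hAB
  · rw [← hA.1.cfc_eq, ← hB.1.cfc_eq]
    exact h k A B hA hAB

namespace OperatorMonotoneOn

lemma cfc_le_cfc (hf : OperatorMonotoneOn f) {A B : Matrix n n ℂ} (hA : A.PosDef) (hAB : A ≤ B) :
    cfc f A ≤ cfc f B := by
  let e := (Fintype.equivFin n).symm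
  have h : cfc f (A.submatrix e e) ≤ cfc f (B.submatrix e e) :=
    operatorMonotoneOn_iff_cfc_le_cfc.1 hf _ _ _ (hA.submatrix e.injective)
      (Matrix.le_iff.2 ((Matrix.le_iff.1 hAB).submatrix e))
  rw [cfc_submatrix_equiv hA.1, cfc_submatrix_equiv (posDef_of_le hA hAB).1] at h
  exact (posSemidef_submatrix_equiv e).1 h

lemma monotoneOn (hf : OperatorMonotoneOn f) : MonotoneOn f (Set.Ioi 0) := by
  intro x hx y _ hxy
  have h := hf.cfc_le_cfc (n := Unit) (PosDef.one.smul hx) (smul_le_smul_of_nonneg_right hxy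
    zero_le_one)
  rw [cfc_smul_one, cfc_smul_one, Matrix.le_iff, ← sub_smul] at h
  simpa using h.diag_nonneg (i := ())

lemma congr (hf : OperatorMonotoneOn f) (hfg : Set.EqOn f g (Set.Ioi 0)) :
    OperatorMonotoneOn g := by
  refine operatorMonotoneOn_iff_cfc_le_cfc.2 fun k A B hA hAB => ?_
  rw [← cfc_congr_of_posDef hA hfg, ← cfc_congr_of_posDef (posDef_of_le hA hAB) hfg]
  exact hf.cfc_le_cfc hA hAB

lemma const (c : ℝ) : OperatorMonotoneOn fun _ => c := by
  refine operatorMonotoneOn_iff_cfc_le_cfc.2 fun k A B hA hAB => ?_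
  rw [cfc_const c A hA.1.isSelfAdjoint, cfc_const c B (posDef_of_le hA hAB).1.isSelfAdjoint]

lemma add (hf : OperatorMonotoneOn f) (hg : OperatorMonotoneOn g) :
    OperatorMonotoneOn fun x => f x + g x := by
  refine operatorMonotoneOn_iff_cfc_le_cfc.2 fun k A B hA hAB => ?_
  have hc (M : Matrix (Fin k) (Fin k) ℂ) := continuousOn_spectrum M
  rw [cfc_add A f g (hc A f) (hc A g), cfc_add B f g (hc B f) (hc B g)]
  exact add_le_add (hf.cfc_le_cfc hA hAB) (hg.cfc_le_cfc hA hAB)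

lemma const_mul (hf : OperatorMonotoneOn f) {c : ℝ} (hc : 0 ≤ c) :
    OperatorMonotoneOn fun x => c * f x := by
  refine operatorMonotoneOn_iff_cfc_le_cfc.2 fun k A B hA hAB => ?_
  rw [cfc_const_mul c f A (continuousOn_spectrum A f),
    cfc_const_mul c f B (continuousOn_spectrum B f)]
  exact smul_le_smul_of_nonneg_left (hf.cfc_le_cfc hA hAB) hc

lemma neg_inv (hf : OperatorMonotoneOn f) (hpos : ∀ x, 0 < x → 0 < f x) :
    OperatorMonotoneOn fun x => -(f x)⁻¹ := by
  refine operatorMonotoneOn_iff_cfc_le_cfc.2 fun k A B hA hAB => ?_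
  have hne x (hx : 0 < x) : f x ≠ 0 := (hpos x hx).ne'
  rw [cfc_neg _ A, cfc_neg _ B, cfc_inv_of_posDef hA hne,
    cfc_inv_of_posDef (posDef_of_le hA hAB) hne]
  exact neg_le_neg (inv_le_inv_of_posDef (posDef_cfc hA hpos) (hf.cfc_le_cfc hA hAB))

lemma neg_comp_inv (hf : OperatorMonotoneOn f) : OperatorMonotoneOn fun x => -f x⁻¹ := by
  refine operatorMonotoneOn_iff_cfc_le_cfc.2 fun k A B hA hAB => ?_
  have hB := posDef_of_le hA hAB
  rw [cfc_neg _ A, cfc_neg _ B, cfc_comp_inv_of_posDef hA, cfc_comp_inv_of_posDef hB]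
  exact neg_le_neg (hf.cfc_le_cfc hB.inv (inv_le_inv_of_posDef hA hAB))

/- Compare `M` with the matrix equal to `Vᴴ * M * V + ε` on the range of `V` and to a large
multiple of the identity on its orthogonal complement. -/
lemma conjTranspose_mul_cfc_mul_le_of_isometry (hf : OperatorMonotoneOn f) {M : Matrix m m ℂ}
    (hM : M.PosDef) {V : Matrix m n ℂ} (hV : Vᴴ * V = 1) {ε : ℝ} (hε : 0 < ε) :
    Vᴴ * cfc f M * V ≤ cfc f (Vᴴ * M * V + ε • 1) := by
  set A : Matrix n n ℂ := Vᴴ * M * V + ε • 1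
  have hA : A.IsHermitian :=
    (isHermitian_conjTranspose_mul_mul V hM.1).add (isHermitian_one.smul (.all ε))
  have hP : IsStarProjection (V * Vᴴ) :=
    ⟨by rw [IsIdempotentElem, Matrix.mul_assoc, ← Matrix.mul_assoc Vᴴ, hV, Matrix.one_mul],
      isHermitian_mul_conjTranspose_self V⟩
  obtain ⟨l, hl⟩ := exists_le_compression_add hP hM.1.isSelfAdjoint hε
  set N := V * A * Vᴴ + l • (1 - V * Vᴴ)
  have hMN : M ≤ N := by
    convert hl using 1
    simp [N, A, Matrix.mul_add, Matrix.add_mul, Matrix.mul_assoc]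
  have hVN : V * A = N * V := by
    simp [N, Matrix.add_mul, Matrix.sub_mul, Matrix.mul_assoc, hV]
  have hN : N.IsHermitian := (posDef_of_le hM hMN).1
  calc Vᴴ * cfc f M * V
      ≤ Vᴴ * cfc f N * V := conjTranspose_mul_mul_le (hf.cfc_le_cfc hM hMN) V
    _ = Vᴴ * V * cfc f A := by
        rw [Matrix.mul_assoc, ← mul_cfc_eq_cfc_mul_of_intertwine hA hN hVN, ← Matrix.mul_assoc]
    _ = cfc f A := by rw [hV, Matrix.one_mul]

/- Dilate `T` to the isometry `V = (T, D)` with `Dᴴ * D = 1 - Tᴴ * T`, and `B` to the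
block-diagonal matrix with blocks `B` and `ε / 2`. -/
lemma conjTranspose_mul_cfc_mul_le_add (hf : OperatorMonotoneOn f)
    (hf0 : ∀ x, 0 < x → 0 ≤ f x) {B : Matrix m m ℂ} (hB : B.PosDef) {T : Matrix m n ℂ}
    (hT : Tᴴ * T ≤ 1) {ε : ℝ} (hε : 0 < ε) :
    Tᴴ * cfc f B * T ≤ cfc f (Tᴴ * B * T + ε • 1) := by
  obtain ⟨D, hD⟩ := CStarAlgebra.nonneg_iff_eq_star_mul_self.1 (sub_nonneg.2 hT)
  rw [star_eq_conjTranspose] at hD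
  set δ := ε / 2
  have hδ : 0 < δ := half_pos hε
  have hδone : (δ • (1 : Matrix n n ℂ)).PosDef := PosDef.one.smul hδ
  set V : Matrix (m ⊕ n) n ℂ := fromRows T D
  have hV : Vᴴ * V = 1 := by
    simp [V, conjTranspose_fromRows_eq_fromCols_conjTranspose, fromCols_mul_fromRows, ← hD]
  have hcompress (X : Matrix m m ℂ) (r : ℝ) :
      Vᴴ * fromBlocks X 0 0 (r • (1 : Matrix n n ℂ)) * V = Tᴴ * X * T + r • (1 - Tᴴ * T) := by
    simp [V, Matrix.mul_assoc, fromBlocks_mul_fromRows, hD,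
      conjTranspose_fromRows_eq_fromCols_conjTranspose, fromCols_mul_fromRows]
  have hcompress_le : Tᴴ * B * T + δ • (1 - Tᴴ * T) + δ • 1 ≤ Tᴴ * B * T + ε • 1 := by
    rw [← add_halves ε, add_smul, add_assoc]
    gcongr
    exact sub_le_self _ (posSemidef_conjTranspose_mul_self T).nonneg
  have hpos : (Tᴴ * B * T + δ • (1 - Tᴴ * T) + δ • 1).PosDef :=
    posDef_of_le hδone <| le_add_of_nonneg_left <| add_nonneg
      (hB.posSemidef.conjTranspose_mul_mul_same T).nonneg (smul_nonneg hδ.le (sub_nonneg.2 hT))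
  calc Tᴴ * cfc f B * T
      ≤ Tᴴ * cfc f B * T + f δ • (1 - Tᴴ * T) :=
        le_add_of_nonneg_right (smul_nonneg (hf0 δ hδ) (sub_nonneg.2 hT))
    _ = Vᴴ * cfc f (fromBlocks B 0 0 (δ • (1 : Matrix n n ℂ))) * V := by
        rw [cfc_fromBlocks_zero hB.1 hδone.1, cfc_smul_one, hcompress]
    _ ≤ cfc f (Tᴴ * B * T + δ • (1 - Tᴴ * T) + δ • 1) := by
        rw [← hcompress]
        exact hf.conjTranspose_mul_cfc_mul_le_of_isometry (posDef_fromBlocks_zero hB hδone) hV hδ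
    _ ≤ cfc f (Tᴴ * B * T + ε • 1) := hf.cfc_le_cfc hpos hcompress_le

lemma conjTranspose_mul_cfc_mul_le (hf : OperatorMonotoneOn f)
    (hf0 : ∀ x, 0 < x → 0 ≤ f x) {A : Matrix n n ℂ} {B : Matrix m m ℂ} (hA : A.PosDef)
    (hB : B.PosDef) {T : Matrix m n ℂ} (hT : Tᴴ * T ≤ 1) (hTA : Tᴴ * B * T ≤ A) :
    Tᴴ * cfc f B * T ≤ cfc f A := by
  obtain ⟨r, hr, hrA⟩ := exists_pos_smul_one_le hA.isStrictlyPositive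
  have hscaled (t : ℝ) (ht : t ∈ Set.Ioo 0 1) : t • (Tᴴ * cfc f B * T) ≤ cfc f A := by
    have hconj (X : Matrix m m ℂ) : (√t • T)ᴴ * X * (√t • T) = t • (Tᴴ * X * T) := by
      simp [conjTranspose_smul, smul_smul, Real.mul_self_sqrt ht.1.le]
    have hcontr : (√t • T)ᴴ * (√t • T) ≤ 1 := by
      calc (√t • T)ᴴ * (√t • T) = t • (Tᴴ * T) := by simpa using hconj 1
        _ ≤ t • 1 := smul_le_smul_of_nonneg_left hT ht.1.le
        _ ≤ 1 := smul_le_of_le_one_left zero_le_one ht.2.le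
    have hε : 0 < (1 - t) * r := mul_pos (sub_pos.2 ht.2) hr
    have hle : t • (Tᴴ * B * T) + ((1 - t) * r) • 1 ≤ A := by
      calc _ ≤ t • A + (1 - t) • A := by
            rw [mul_smul]
            exact add_le_add (smul_le_smul_of_nonneg_left hTA ht.1.le)
              (smul_le_smul_of_nonneg_left hrA (sub_pos.2 ht.2).le)
        _ = A := by module
    have hpos : (t • (Tᴴ * B * T) + ((1 - t) * r) • 1).PosDef :=
      posDef_of_le (PosDef.one.smul hε) <| le_add_of_nonneg_left <|
        smul_nonneg ht.1.le (hB.posSemidef.conjTranspose_mul_mul_same T).nonneg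
    have h := hf.conjTranspose_mul_cfc_mul_le_add hf0 hB hcontr hε
    rw [hconj, hconj] at h
    exact h.trans (hf.cfc_le_cfc hpos hle)
  have hlim : Filter.Tendsto (fun t : ℝ => t • (Tᴴ * cfc f B * T)) (nhdsWithin 1 (Set.Iio 1))
      (nhds (Tᴴ * cfc f B * T)) := by
    have : Continuous fun t : ℝ => t • (Tᴴ * cfc f B * T) := by fun_prop
    simpa using (this.tendsto 1).mono_left nhdsWithin_le_nhds
  refine le_of_tendsto hlim ?_
  filter_upwards [Ioo_mem_nhdsLT zero_lt_one] with t ht using hscaled t ht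

/- The transformer inequality for `T = A^{1/2} B^{-1/2}`, a contraction with
`Tᴴ * A⁻¹ * T = B⁻¹`. -/
lemma mul_comp_inv (hf : OperatorMonotoneOn f) (hf0 : ∀ x, 0 < x → 0 ≤ f x) :
    OperatorMonotoneOn fun x => x * f x⁻¹ := by
  refine operatorMonotoneOn_iff_cfc_le_cfc.2 fun k A B hA hAB => ?_
  have hB := posDef_of_le hA hAB
  rw [cfc_mul_comp_inv hA, cfc_mul_comp_inv hB]
  have hS := posDef_cfc hA fun x => Real.sqrt_pos.2
  have hR := posDef_cfc hB fun x => Real.sqrt_pos.2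
  have hSS := cfc_sqrt_mul_cfc_sqrt hA.posSemidef
  have hRR := cfc_sqrt_mul_cfc_sqrt hB.posSemidef
  set S := cfc Real.sqrt A
  set R := cfc Real.sqrt B
  have hRu : IsUnit R.det := (isUnit_iff_isUnit_det R).1 hR.isUnit
  have hSu : IsUnit S.det := (isUnit_iff_isUnit_det S).1 hS.isUnit
  have hTstar : (S * R⁻¹)ᴴ = R⁻¹ * S := by
    rw [conjTranspose_mul, hS.1.eq, hR.inv.1.eq]
  have hT : (S * R⁻¹)ᴴ * (S * R⁻¹) ≤ 1 := by
    have h := conjTranspose_mul_mul_le hAB R⁻¹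
    rw [hR.inv.1.eq, ← hSS, ← hRR] at h
    rw [hTstar]
    simpa [Matrix.mul_assoc, nonsing_inv_mul_cancel_left _ _ hRu, mul_nonsing_inv _ hRu] using h
  have hTA : (S * R⁻¹)ᴴ * A⁻¹ * (S * R⁻¹) = B⁻¹ := by
    rw [hTstar, ← hSS, ← hRR, Matrix.mul_inv_rev, Matrix.mul_inv_rev]
    simp [Matrix.mul_assoc, nonsing_inv_mul_cancel_left _ _ hSu,
      mul_nonsing_inv_cancel_left _ _ hSu]
  have h := conjTranspose_mul_mul_le
    (hf.conjTranspose_mul_cfc_mul_le hf0 hB.inv hA.inv hT hTA.le) R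
  rw [hTstar, hR.1.eq] at h
  simpa [Matrix.mul_assoc, mul_nonsing_inv_cancel_left _ _ hRu, nonsing_inv_mul _ hRu] using h

lemma id_div (hf : OperatorMonotoneOn f) (hpos : ∀ x, 0 < x → 0 < f x) :
    OperatorMonotoneOn fun x => x / f x := by
  have hdual := hf.mul_comp_inv fun x hx => (hpos x hx).le
  have hdual_pos x (hx : 0 < x) : 0 < x * f x⁻¹ := mul_pos hx (hpos _ (inv_pos.2 hx))
  refine (hdual.neg_inv hdual_pos).neg_comp_inv.congr fun x _ => ?_
  simp [div_eq_mul_inv, mul_comm]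

end OperatorMonotoneOn

end OperatorMonotone

section FTilde

/-- The transform `f ↦ f̃` of functions on `(0,∞)`. The argument `f₀` stands for the boundary value
`f(0) = lim_{x→0⁺} f(x)`, which need not be the value at `0` of `f : ℝ → ℝ`. -/
noncomputable def fTilde (f : ℝ → ℝ) (f₀ x : ℝ) : ℝ :=
  ((x + 1) - (x - 1) ^ 2 * f₀ / f x) / 2

variable {f : ℝ → ℝ} {f₀ : ℝ}

lemma operatorMonotoneOn_fTilde (hf : OperatorMonotoneOn f) (hpos : ∀ x, 0 < x → 0 < f x)
    (hsymm : ∀ x, 0 < x → f x = x * f (1 / x)) (hf₀ : 0 ≤ f₀) (hle : ∀ x, 0 < x → f₀ ≤ f x) :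
    OperatorMonotoneOn (fTilde f f₀) := by
  set g : ℝ → ℝ := fun x => 1 + f₀ * (x / f x + -(f x)⁻¹)
  have hg : OperatorMonotoneOn g :=
    (OperatorMonotoneOn.const 1).add (((hf.id_div hpos).add (hf.neg_inv hpos)).const_mul hf₀)
  have hg_nonneg x (hx : 0 < x) : 0 ≤ g x := by
    have hfx := hpos x hx
    have hgx : g x = (f x - f₀ + f₀ * x) / f x := by simp only [g]; field_simp; ring
    rw [hgx]
    exact div_nonneg (add_nonneg (sub_nonneg.2 (hle x hx)) (mul_nonneg hf₀ hx.le)) hfx.le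
  refine ((hg.add (hg.mul_comp_inv hg_nonneg)).const_mul (by positivity : (0 : ℝ) ≤ 1 / 2)).congr
    fun x (hx : 0 < x) => ?_
  simp only [g, fTilde, hsymm x hx, one_div]
  field_simp
  ring

lemma fTilde_eq_mul_fTilde_one_div {x : ℝ} (hx : x ≠ 0) (hsymm : f x = x * f (1 / x)) :
    fTilde f f₀ x = x * fTilde f f₀ (1 / x) := by
  simp only [fTilde, hsymm]
  field_simp
  ring

lemma fTilde_one : fTilde f f₀ 1 = 1 := by norm_num [fTilde]

lemma tendsto_fTilde_nhdsGT_zero (hlim : Filter.Tendsto f (nhdsWithin 0 (Set.Ioi 0)) (nhds f₀))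
    (hf₀ : f₀ ≠ 0) : Filter.Tendsto (fTilde f f₀) (nhdsWithin 0 (Set.Ioi 0)) (nhds 0) := by
  have hid : Filter.Tendsto (fun x : ℝ => x) (nhdsWithin 0 (Set.Ioi 0)) (nhds 0) :=
    Filter.tendsto_id.mono_left nhdsWithin_le_nhds
  have h := ((hid.add_const 1).sub
    ((((hid.sub_const 1).pow 2).mul_const f₀).div hlim hf₀)).div_const 2
  have hzero : fTilde f f₀ = fun x => ((x + 1) - (x - 1) ^ 2 * f₀ / f x) / 2 := rfl
  simpa [hzero, hf₀] using h

end FTilde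

theorem ftilde_operatorMonotone_symm_norm_nonregular_general
    (f : ℝ → ℝ) (hfpos : ∀ x : ℝ, 0 < x → 0 < f x)
    (hmono : OperatorMonotoneOn f)
    (hsymm : ∀ x : ℝ, 0 < x → f x = x * f (1 / x))
    (f0 : ℝ) (hlim : Filter.Tendsto f (nhdsWithin 0 (Set.Ioi 0)) (nhds f0))
    (hreg : f0 ≠ 0)
    (ft : ℝ → ℝ)
    (hft : ∀ x : ℝ, 0 < x → ft x = ((x + 1) - (x - 1) ^ 2 * f0 / f x) / 2) :
    OperatorMonotoneOn ft
      ∧ (∀ x : ℝ, 0 < x → ft x = x * ft (1 / x))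
      ∧ ft 1 = 1
      ∧ Filter.Tendsto ft (nhdsWithin 0 (Set.Ioi 0)) (nhds 0) := by
  have hfT x (hx : 0 < x) : fTilde f f0 x = ft x := (hft x hx).symm
  have hf0 : 0 ≤ f0 := ge_of_tendsto hlim <| by
    filter_upwards [self_mem_nhdsWithin] with x hx using (hfpos x hx).le
  have hf0_le x (hx : 0 < x) : f0 ≤ f x := le_of_tendsto hlim <| by
    filter_upwards [Ioo_mem_nhdsGT hx] with y hy using hmono.monotoneOn hy.1 hx hy.2.le
  refine ⟨(operatorMonotoneOn_fTilde hmono hfpos hsymm hf0 hf0_le).congr hfT, fun x hx => ?_, ?_,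
    (tendsto_fTilde_nhdsGT_zero hlim hreg).congr' (Set.EqOn.eventuallyEq_nhdsWithin hfT)⟩
  · rw [← hfT x hx, ← hfT (1 / x) (one_div_pos.2 hx)]
    exact fTilde_eq_mul_fTilde_one_div hx.ne' (hsymm x hx)
  · rw [← hfT 1 one_pos, fTilde_one]

/-- if `f : (0,∞) → (0,∞)` is operator monotone, symmetric
(`f(x) = x·f(1/x)`), normalized (`f(1) = 1`) and regular (`f(0) := lim_{x→0⁺} f(x)` exists
and is nonzero), then `f̃(x) := ½[(x+1) − (x−1)²·f(0)/f(x)]` is operator monotone,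
symmetric, normalized, and non-regular: `lim_{x→0⁺} f̃(x) = 0`. -/
theorem ftilde_operatorMonotone_symm_norm_nonregular
    (f : ℝ → ℝ) (hfpos : ∀ x : ℝ, 0 < x → 0 < f x)
    (hmono : OperatorMonotoneOn f)
    (hsymm : ∀ x : ℝ, 0 < x → f x = x * f (1 / x))
    (hnorm : f 1 = 1)
    (f0 : ℝ) (hlim : Filter.Tendsto f (nhdsWithin 0 (Set.Ioi 0)) (nhds f0))
    (hreg : f0 ≠ 0)
    (ft : ℝ → ℝ)
    (hft : ∀ x : ℝ, 0 < x → ft x = ((x + 1) - (x - 1) ^ 2 * f0 / f x) / 2) :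
    OperatorMonotoneOn ft
      ∧ (∀ x : ℝ, 0 < x → ft x = x * ft (1 / x))
      ∧ ft 1 = 1
      ∧ Filter.Tendsto ft (nhdsWithin 0 (Set.Ioi 0)) (nhds 0) := by
  exact ftilde_operatorMonotone_symm_norm_nonregular_general f hfpos hmono hsymm f0 hlim hreg
    ft hft
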